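/- Let p be a prime and SNR > 0. Let X be a random variable uniformly distributed over the constellation Λ_p, and let Θ be a real random variable statistically independent of X. Define U = (X + Θ)*. Then 𝔼[exp(−(SNR/8)·U²)] ≤ 1/p + √(2π/(3·SNR)). -/

import Mathlib

open MeasureTheory ProbabilityTheory Real Filter
open scoped ENNReal

noncomputable section

/-- Reduction of `x` modulo the half-open interval `[a, b)`. -/
def modIco (a b x : ℝ) : ℝ := a + (b - a) * Int.fract ((x - a) / (b - a))

/-- `L = √12`. -/
def Lc : ℝ := Real.sqrt 12

/-- `x*`: reduction of `x` modulo the basic interval `I = [-L/2, L/2)`. -/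
def starI (x : ℝ) : ℝ := modIco (-(Lc / 2)) (Lc / 2) x

/-- `δ(p, γ) = min_{l ∈ {1,…,p−1}} |l·γ − ⌊l·γ⌉|`. -/
def deltaP (p : ℕ) (γ : ℝ) : ℝ :=
  sInf {d : ℝ | ∃ l : ℕ, 1 ≤ l ∧ l ≤ p - 1 ∧ d = |(l : ℝ) * γ - round ((l : ℝ) * γ)|}

/-- The set `P'(γ)` of admissible primes (depends on the SNR). -/
def Pgood (SNR : ℝ) (γ : ℝ) : Set ℕ :=
  {p | p.Prime ∧
    Real.exp (-(3 * SNR / (2 * (p : ℝ) ^ 2)) * (modIco (-(1/4)) (1/4) γ) ^ 2) <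
      1 - 2 * (p : ℝ) * Real.exp (-(3 * SNR / 8))}

/-- First rate expression in the achievable-rate theorem. -/
def rateA (SNR : ℝ) (p : ℕ) (γ : ℝ) : ℝ :=
  -(1/2) * Real.logb 2 (1/(p : ℝ)^2 + Real.sqrt (2 * π / (3 * SNR))
    + (1/(p : ℝ)) * Real.exp (-(3 * SNR / (2 * (p : ℝ)^2)) * (deltaP p γ)^2)
    + 2 * Real.exp (-(3 * SNR / 8)))

/-- Second rate expression in the achievable-rate theorem. -/
def rateB (SNR : ℝ) (p : ℕ) (γ : ℝ) : ℝ :=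
  -Real.logb 2 (1/(p : ℝ) + Real.sqrt (2 * π / (3 * (deltaP p γ)^2 * SNR))
    + 2 * Real.exp (-(3 * SNR / 8)))

/-- The `k`-th point of the constellation `Λ_p`. -/
def constPt (p : ℕ) (k : ℕ) : ℝ := starI (Lc / (p : ℝ) * (k : ℝ))

/-- The constellation `Λ_p` as a finite set of reals. -/
def constSet (p : ℕ) : Finset ℝ := (Finset.range p).image (constPt p)

/-- The uniform probability measure on the constellation `Λ_p`. -/
def uniformConst (p : ℕ) : Measure ℝ :=
  (p : ℝ≥0∞)⁻¹ • ∑ k ∈ Finset.range p, Measure.dirac (constPt p k)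

/-!
If `f` is integrable and unimodal with peak at `0`, then its sum over any coset of `hℤ` in `ℝ` is at
most `f 0 + h⁻¹ * ∫ f`: off the peak each term is at most the average of `f` over the gap of
length `h` separating it from the previous point towards `0`, and in the one gap that contains `0`
the two neighbouring points weigh at most `f 0` in excess of the integral.
Given `Θ = θ`, the points `(X + θ)*` are `p` distinct points of a coset of `(L/p)ℤ`, so averaging
gives at most `f 0 / p + (∫ f) / L`. Integrate over the law of `Θ` and take `f` Gaussian.
-/

lemma toIcoMod_toIcoMod_add {G : Type*} [AddCommGroup G] [LinearOrder G] [IsOrderedAddMonoid G]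
    [Archimedean G] {p : G} (hp : 0 < p) (a b x y : G) :
    toIcoMod hp a (toIcoMod hp b x + y) = toIcoMod hp a (x + y) := by
  rw [← self_sub_toIcoDiv_zsmul hp b x, sub_add_eq_add_sub, toIcoMod_sub_zsmul]

lemma injOn_range_natCast_sub_mul (p : ℕ) (q : ℕ → ℤ) :
    Set.InjOn (fun k : ℕ ↦ (k - p * q k : ℤ)) (Finset.range p) := by
  intro i hi j hj hij
  have h_modEq : (i : ℤ) ≡ j [ZMOD p] :=
    calc (i : ℤ) ≡ i - p * q i [ZMOD p] := Int.modEq_sub_modulus_mul_iff.2 rfl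
      _ = j - p * q j := hij
      _ ≡ j [ZMOD p] := (Int.modEq_sub_modulus_mul_iff.2 rfl).symm
  exact (Int.natCast_modEq_iff.1 h_modEq).eq_of_lt_of_lt (Finset.mem_range.1 hi)
    (Finset.mem_range.1 hj)

lemma integrableOn_Ioi_zero_comp_add_right {E : Type*} [NormedAddCommGroup E] {f : ℝ → E} {b : ℝ}
    (hf : IntegrableOn f (Set.Ioi b)) :
    IntegrableOn (fun x ↦ f (x + b)) (Set.Ioi 0) := by
  simpa [Function.comp_def] using
    ((measurePreserving_add_right volume b).integrableOn_comp_preimage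
      (measurableEmbedding_addRight b)).2 hf

lemma integral_Ioi_zero_comp_add_right {E : Type*} [NormedAddCommGroup E] [NormedSpace ℝ E]
    (f : ℝ → E) (b : ℝ) :
    ∫ x in Set.Ioi 0, f (x + b) = ∫ x in Set.Ioi b, f x := by
  simpa using (measurePreserving_add_right volume b).setIntegral_preimage_emb
    (measurableEmbedding_addRight b) f (Set.Ioi b)

lemma antitoneOn_Ici_zero_comp_add_right {α : Type*} [Preorder α] {f : ℝ → α} {b : ℝ}
    (hf : AntitoneOn f (Set.Ici 0)) (hb : 0 ≤ b) :
    AntitoneOn (fun x ↦ f (x + b)) (Set.Ici 0) :=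
  fun _ hx _ hy hxy ↦ hf (add_nonneg hx hb) (add_nonneg hy hb) (by gcongr)

section HalfLine

variable {f : ℝ → ℝ} {b : ℝ}

lemma summable_nat_add_of_antitoneOn (hf : AntitoneOn f (Set.Ici 0))
    (hfi : IntegrableOn f (Set.Ioi 0)) (hf0 : ∀ x ∈ Set.Ioi 0, 0 ≤ f x) (hb : 0 ≤ b) :
    Summable fun n : ℕ ↦ f (n + b) :=
  (antitoneOn_Ici_zero_comp_add_right hf hb).summable_of_integrableOn_Ioi_zero
    (integrableOn_Ioi_zero_comp_add_right (hfi.mono_set (Set.Ioi_subset_Ioi hb)))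
    fun _ hx ↦ hf0 _ (add_pos_of_pos_of_nonneg hx hb)

lemma tsum_nat_add_le_of_antitoneOn (hf : AntitoneOn f (Set.Ici 0))
    (hfi : IntegrableOn f (Set.Ioi 0)) (hf0 : ∀ x ∈ Set.Ioi 0, 0 ≤ f x)
    (hb : 0 ≤ b) (hb1 : b ≤ 1) :
    ∑' n : ℕ, f (n + b) ≤ (1 - b) * f 0 + ∫ x in Set.Ioi 0, f x := by
  have hfib : IntegrableOn f (Set.Ioi b) := hfi.mono_set (Set.Ioi_subset_Ioi hb)
  have hfic : IntegrableOn f (Set.Ioc 0 b) := hfi.mono_set Set.Ioc_subset_Ioi_self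
  have h_tail : ∑' n : ℕ, f (n + b) ≤ f b + ∫ x in Set.Ioi b, f x := by
    have h := (antitoneOn_Ici_zero_comp_add_right hf hb).tsum_le_integral
      (integrableOn_Ioi_zero_comp_add_right hfib)
      fun _ hx ↦ hf0 _ (add_pos_of_pos_of_nonneg hx hb)
    rwa [integral_Ioi_zero_comp_add_right, zero_add] at h
  have h_head : b * f b ≤ ∫ x in Set.Ioc 0 b, f x := by
    have h := setIntegral_ge_of_const_le_real measurableSet_Ioc (by simp)
      (fun _ hx ↦ hf hx.1.le hb hx.2) hfic
    simpa [mul_comm, hb] using h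
  have h_split : ∫ x in Set.Ioi 0, f x =
      (∫ x in Set.Ioc 0 b, f x) + ∫ x in Set.Ioi b, f x := by
    rw [← setIntegral_union Set.Ioc_disjoint_Ioi_same measurableSet_Ioi hfic hfib,
      Set.Ioc_union_Ioi_eq_Ioi hb]
  have h_zero : (1 - b) * f b ≤ (1 - b) * f 0 :=
    mul_le_mul_of_nonneg_left (hf Set.self_mem_Ici hb hb) (sub_nonneg.2 hb1)
  linarith

end HalfLine

/-- A nonnegative function on the line that increases up to its peak at the origin and decreases
after it; monotonicity is understood in the weak sense. -/
structure UnimodalAtZero (f : ℝ → ℝ) : Prop where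
  nonneg : ∀ x, 0 ≤ f x
  monotoneOn : MonotoneOn f (Set.Iic 0)
  antitoneOn : AntitoneOn f (Set.Ici 0)

namespace UnimodalAtZero

variable {f : ℝ → ℝ} {h : ℝ}

lemma le_apply_zero (hf : UnimodalAtZero f) (x : ℝ) : f x ≤ f 0 := by
  rcases le_total x 0 with hx | hx
  · exact hf.monotoneOn hx Set.self_mem_Iic hx
  · exact hf.antitoneOn Set.self_mem_Ici hx hx

lemma norm_le_apply_zero (hf : UnimodalAtZero f) (x : ℝ) : ‖f x‖ ≤ f 0 := by
  rw [Real.norm_of_nonneg (hf.nonneg x)]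
  exact hf.le_apply_zero x

lemma measurable (hf : UnimodalAtZero f) : Measurable f := by
  have hmono : Monotone fun x ↦ f (min x 0) := fun x y hxy ↦
    hf.monotoneOn (min_le_right x 0) (min_le_right y 0) (by gcongr)
  have hanti : Antitone fun x ↦ f (max x 0) := fun x y hxy ↦
    hf.antitoneOn (le_max_right x 0) (le_max_right y 0) (by gcongr)
  have hmin : f = fun x ↦ min (f (min x 0)) (f (max x 0)) := by
    ext x
    rcases le_total x 0 with hx | hx <;> simp [hx, hf.le_apply_zero x]
  rw [hmin]
  exact hmono.measurable.min hanti.measurable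

lemma comp_neg (hf : UnimodalAtZero f) : UnimodalAtZero fun x ↦ f (-x) where
  nonneg x := hf.nonneg (-x)
  monotoneOn _ hx _ hy hxy := hf.antitoneOn (Set.mem_Ici.2 (neg_nonneg.2 hy))
    (Set.mem_Ici.2 (neg_nonneg.2 hx)) (neg_le_neg hxy)
  antitoneOn _ hx _ hy hxy := hf.monotoneOn (Set.mem_Iic.2 (neg_nonpos.2 hy))
    (Set.mem_Iic.2 (neg_nonpos.2 hx)) (neg_le_neg hxy)

lemma comp_mul_left (hf : UnimodalAtZero f) (hh : 0 ≤ h) : UnimodalAtZero fun x ↦ f (h * x) where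
  nonneg x := hf.nonneg (h * x)
  monotoneOn _ hx _ hy hxy := hf.monotoneOn (mul_nonpos_of_nonneg_of_nonpos hh hx)
    (mul_nonpos_of_nonneg_of_nonpos hh hy) (by gcongr)
  antitoneOn _ hx _ hy hxy := hf.antitoneOn (mul_nonneg hh hx) (mul_nonneg hh hy) (by gcongr)

lemma sum_int_add_le_of_mem_Icc (hf : UnimodalAtZero f) (hfi : Integrable f) {a : ℝ}
    (ha : a ∈ Set.Icc 0 1) (s : Finset ℤ) :
    ∑ n ∈ s, f (n + a) ≤ f 0 + ∫ x, f x := by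
  have ha' : 0 ≤ 1 - a := sub_nonneg.2 ha.2
  have h_pos := summable_nat_add_of_antitoneOn hf.antitoneOn hfi.integrableOn
    (fun x _ ↦ hf.nonneg x) ha.1
  have h_neg := summable_nat_add_of_antitoneOn hf.comp_neg.antitoneOn hfi.comp_neg.integrableOn
    (fun x _ ↦ hf.nonneg (-x)) ha'
  have h_int : HasSum (fun n : ℤ ↦ f (n + a))
      (∑' n : ℕ, f (n + a) + ∑' n : ℕ, f (-(n + (1 - a)))) := by
    refine HasSum.of_nat_of_neg_add_one (by simpa using h_pos.hasSum) ?_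
    convert h_neg.hasSum using 3
    push_cast
    ring
  -- The half-lines contribute `(1 - a) * f 0` and `a * f 0` on top of their integrals.
  have h_pos_le := tsum_nat_add_le_of_antitoneOn hf.antitoneOn hfi.integrableOn
    (fun x _ ↦ hf.nonneg x) ha.1 ha.2
  have h_neg_le := tsum_nat_add_le_of_antitoneOn hf.comp_neg.antitoneOn
    hfi.comp_neg.integrableOn (fun x _ ↦ hf.nonneg (-x)) ha' (sub_le_self 1 ha.1)
  rw [integral_comp_neg_Ioi, neg_zero] at h_neg_le
  have h_split := intervalIntegral.integral_Iic_add_Ioi (b := (0 : ℝ)) hfi.integrableOn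
    hfi.integrableOn
  have h_le := sum_le_hasSum s (fun n _ ↦ hf.nonneg (n + a)) h_int
  linarith

lemma sum_int_add_le (hf : UnimodalAtZero f) (hfi : Integrable f) (a : ℝ) (s : Finset ℤ) :
    ∑ n ∈ s, f (n + a) ≤ f 0 + ∫ x, f x :=
  calc ∑ n ∈ s, f (n + a)
      = ∑ n ∈ s.map (Equiv.addRight ⌊a⌋).toEmbedding, f (n + Int.fract a) := by
        simp [add_assoc]
    _ ≤ f 0 + ∫ x, f x :=
        hf.sum_int_add_le_of_mem_Icc hfi ⟨Int.fract_nonneg a, (Int.fract_lt_one a).le⟩ _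

lemma sum_mul_int_add_le (hf : UnimodalAtZero f) (hfi : Integrable f) (hh : 0 < h) (θ : ℝ)
    (s : Finset ℤ) :
    ∑ n ∈ s, f (h * n + θ) ≤ f 0 + h⁻¹ * ∫ x, f x :=
  calc ∑ n ∈ s, f (h * n + θ)
      = ∑ n ∈ s, f (h * (n + θ / h)) := by
        simp only [mul_add, mul_div_cancel₀ θ hh.ne']
    _ ≤ f (h * 0) + ∫ x, f (h * x) :=
        (hf.comp_mul_left hh.le).sum_int_add_le (hfi.comp_mul_left' hh.ne') (θ / h) s
    _ = f 0 + h⁻¹ * ∫ x, f x := by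
        rw [mul_zero, Measure.integral_comp_mul_left, abs_of_pos (inv_pos.2 hh), smul_eq_mul]

lemma sum_toIcoMod_le (hf : UnimodalAtZero f) (hfi : Integrable f) {p : ℕ} (hp : p ≠ 0) {L : ℝ}
    (hL : 0 < L) (a θ : ℝ) :
    ∑ k ∈ Finset.range p, f (toIcoMod hL a (L / p * k + θ)) ≤ f 0 + p / L * ∫ x, f x := by
  have hp0 : (0 : ℝ) < p := Nat.cast_pos.2 (Nat.pos_of_ne_zero hp)
  set q : ℕ → ℤ := fun k ↦ toIcoDiv hL a (L / p * k + θ)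
  set m : ℕ → ℤ := fun k ↦ k - p * q k
  have h_coset (k : ℕ) : toIcoMod hL a (L / p * k + θ) = L / p * m k + θ := by
    rw [← self_sub_toIcoDiv_zsmul, zsmul_eq_mul]
    simp only [m, q]
    push_cast
    field_simp
    ring
  have h_inj : Set.InjOn m (Finset.range p) := injOn_range_natCast_sub_mul p q
  calc ∑ k ∈ Finset.range p, f (toIcoMod hL a (L / p * k + θ))
      = ∑ n ∈ (Finset.range p).image m, f (L / p * n + θ) := by
        rw [Finset.sum_image h_inj]
        simp only [h_coset]
    _ ≤ f 0 + (L / p)⁻¹ * ∫ x, f x := hf.sum_mul_int_add_le hfi (div_pos hL hp0) θ _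
    _ = f 0 + p / L * ∫ x, f x := by rw [inv_div]

end UnimodalAtZero

lemma unimodalAtZero_exp_neg_mul_sq {c : ℝ} (hc : 0 ≤ c) :
    UnimodalAtZero fun x ↦ rexp (-c * x ^ 2) where
  nonneg _ := (Real.exp_pos _).le
  monotoneOn _ _ _ hy hxy := Real.exp_le_exp.2 <| mul_le_mul_of_nonpos_left
    (by simpa only [neg_sq] using pow_le_pow_left₀ (neg_nonneg.2 hy) (neg_le_neg hxy) 2)
    (neg_nonpos.2 hc)
  antitoneOn _ hx _ _ hxy := Real.exp_le_exp.2 <| mul_le_mul_of_nonpos_left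
    (pow_le_pow_left₀ hx hxy 2) (neg_nonpos.2 hc)

lemma modIco_eq_toIcoMod {a b L : ℝ} (hL : 0 < L) (hab : b - a = L) (x : ℝ) :
    modIco a b x = toIcoMod hL a x := by
  rw [modIco, hab, toIcoMod_eq_add_fract_mul, mul_comm]

lemma Lc_pos : 0 < Lc := Real.sqrt_pos.2 (by norm_num)

lemma starI_eq_toIcoMod (x : ℝ) : starI x = toIcoMod Lc_pos (-(Lc / 2)) x :=
  modIco_eq_toIcoMod Lc_pos (by ring) x

lemma starI_starI_add (x y : ℝ) : starI (starI x + y) = starI (x + y) := by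
  simp only [starI_eq_toIcoMod, toIcoMod_toIcoMod_add]

lemma measurable_starI : Measurable starI := by
  unfold starI modIco
  fun_prop

lemma UnimodalAtZero.sum_starI_constPt_add_le {f : ℝ → ℝ} (hf : UnimodalAtZero f)
    (hfi : Integrable f) {p : ℕ} (hp : p ≠ 0) (θ : ℝ) :
    ∑ k ∈ Finset.range p, f (starI (constPt p k + θ)) ≤ f 0 + p / Lc * ∫ x, f x := by
  simp only [constPt, starI_starI_add]
  simpa only [starI_eq_toIcoMod] using hf.sum_toIcoMod_le hfi hp Lc_pos (-(Lc / 2)) θ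

lemma integral_uniformConst (p : ℕ) (g : ℝ → ℝ) :
    ∫ x, g x ∂uniformConst p = (p : ℝ)⁻¹ * ∑ k ∈ Finset.range p, g (constPt p k) := by
  rw [uniformConst, integral_smul_measure,
    integral_finsetSum_measure fun _ _ ↦ integrable_dirac enorm_lt_top]
  simp

lemma UnimodalAtZero.integral_uniformConst_starI_add_le {f : ℝ → ℝ} (hf : UnimodalAtZero f)
    (hfi : Integrable f) {p : ℕ} (hp : p ≠ 0) (θ : ℝ) :
    ∫ x, f (starI (x + θ)) ∂uniformConst p ≤ f 0 / p + (∫ x, f x) / Lc := by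
  have hp0 : (p : ℝ) ≠ 0 := Nat.cast_ne_zero.2 hp
  calc ∫ x, f (starI (x + θ)) ∂uniformConst p
      = (p : ℝ)⁻¹ * ∑ k ∈ Finset.range p, f (starI (constPt p k + θ)) :=
        integral_uniformConst p _
    _ ≤ (p : ℝ)⁻¹ * (f 0 + p / Lc * ∫ x, f x) := by
        gcongr
        exact hf.sum_starI_constPt_add_le hfi hp θ
    _ = f 0 / p + (∫ x, f x) / Lc := by field_simp

lemma integral_le_of_indepFun {Ω α β : Type*} [MeasurableSpace Ω] [MeasurableSpace α]
    [MeasurableSpace β] {μ : Measure Ω} [IsProbabilityMeasure μ] {X : Ω → α} {Y : Ω → β}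
    (hX : AEMeasurable X μ) (hY : AEMeasurable Y μ) (hXY : IndepFun X Y μ) {g : α × β → ℝ}
    (hg : Integrable g ((μ.map X).prod (μ.map Y))) {C : ℝ}
    (hC : ∀ y, ∫ x, g (x, y) ∂μ.map X ≤ C) :
    ∫ ω, g (X ω, Y ω) ∂μ ≤ C := by
  have := Measure.isProbabilityMeasure_map hX
  have := Measure.isProbabilityMeasure_map hY
  have h_map := hXY.map_prod_eq_prod_map_map hX hY
  calc ∫ ω, g (X ω, Y ω) ∂μ
      = ∫ z, g z ∂(μ.map X).prod (μ.map Y) := by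
        rw [← h_map, integral_map (hX.prodMk hY) (h_map ▸ hg.aestronglyMeasurable)]
    _ = ∫ y, ∫ x, g (x, y) ∂μ.map X ∂μ.map Y := integral_prod_symm g hg
    _ ≤ ∫ _, C ∂μ.map Y := integral_mono hg.integral_prod_right (integrable_const C) hC
    _ = C := by simp

lemma integral_exp_neg_mul_sq_div_Lc (SNR : ℝ) :
    (∫ x, rexp (-(SNR / 8) * x ^ 2)) / Lc = √(2 * π / (3 * SNR)) := by
  rw [integral_gaussian, Lc, ← Real.sqrt_div' _ (by norm_num)]
  congr 1
  field_simp
  norm_num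

theorem lemma_expectation_general {Ω : Type*} [MeasurableSpace Ω] {μ : Measure Ω}
    [IsProbabilityMeasure μ] {p : ℕ} {X Θ : Ω → ℝ} (hX : AEMeasurable X μ)
    (hΘ : AEMeasurable Θ μ) (hXunif : μ.map X = uniformConst p) (hindep : IndepFun X Θ μ)
    {f : ℝ → ℝ} (hf : UnimodalAtZero f) (hfi : Integrable f) :
    ∫ ω, f (starI (X ω + Θ ω)) ∂μ ≤ f 0 / p + (∫ x, f x) / Lc := by
  have := Measure.isProbabilityMeasure_map hX
  have hp : p ≠ 0 := by
    rintro rfl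
    exact IsProbabilityMeasure.ne_zero (μ.map X) (by simp [hXunif, uniformConst])
  have := Measure.isProbabilityMeasure_map hΘ
  have h_meas : Measurable fun z : ℝ × ℝ ↦ f (starI (z.1 + z.2)) :=
    hf.measurable.comp (measurable_starI.comp measurable_add)
  have h_int : Integrable (fun z : ℝ × ℝ ↦ f (starI (z.1 + z.2))) ((μ.map X).prod (μ.map Θ)) :=
    .of_bound h_meas.aestronglyMeasurable (f 0) (.of_forall fun _ ↦ hf.norm_le_apply_zero _)
  refine integral_le_of_indepFun hX hΘ hindep h_int fun θ ↦ ?_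
  rw [hXunif]
  exact hf.integral_uniformConst_starI_add_le hfi hp θ

/-- **Lemma 3.** For `X` uniform on `Λ_p` and `Θ` independent of `X`,
with `U = (X + Θ)*`, one has `𝔼[exp(−(SNR/8)·U²)] ≤ 1/p + √(2π/(3·SNR))`. -/
theorem lemma_expectation
    (p : ℕ) (hp : p.Prime) (SNR : ℝ) (hSNR : 0 < SNR)
    (Ω : Type) (_ : MeasurableSpace Ω) (μ : Measure Ω) [IsProbabilityMeasure μ]
    (X Θ : Ω → ℝ) (hX : Measurable X) (hΘ : Measurable Θ)
    (hXunif : Measure.map X μ = uniformConst p)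
    (hindep : IndepFun X Θ μ) :
    ∫ ω, Real.exp (-(SNR / 8) * (starI (X ω + Θ ω)) ^ 2) ∂μ
      ≤ 1 / (p : ℝ) + Real.sqrt (2 * π / (3 * SNR)) := by
  rw [← integral_exp_neg_mul_sq_div_Lc]
  simpa using
    lemma_expectation_general hX.aemeasurable hΘ.aemeasurable hXunif hindep
      (unimodalAtZero_exp_neg_mul_sq (c := SNR / 8) (by positivity))
      (integrable_exp_neg_mul_sq (by positivity))
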